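/- Let φ be an entire function on ℂ^d of order at most 2 (i.e. for every ε > 0 there is C_ε with |φ(z)| ≤ C_ε exp(‖z‖^{2+ε}) for all z ∈ ℂ^d) such that on every complex line, either φ is identically 0 or it has at most N zeros counted with multiplicity. Then there exist a polynomial P of degree at most N and a polynomial Q of degree at most 2 such that φ(z) = P(z) e^{Q(z)} for all z ∈ ℂ^d. -/

import Mathlib

open MeasureTheory Real Complex MvPolynomial

/-!
Unless `φ = 0`, translate so that the base point is a point `a` with `φ a ≠ 0`, and put
`ψ z = φ (a + z) / φ a`. On each complex line through the origin, growth of order at most two,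
the Borel–Carathéodory inequality and Liouville's theorem give (`line_factor`)
`ψ (t z) = (∏ i, (1 - l z i * t)) * exp (c₁ z * t + c₂ z * t ^ 2)`, with `N` numbers `l z i`.
Nothing is known a priori about the dependence of `l`, `c₁`, `c₂` on `z`, except that
`‖l z i‖` grows at most linearly, because `ψ` has no zeros near the origin.

The Taylor coefficients at `t = 0` of `ψ (t z)`, hence those of its logarithmic derivative, are
holomorphic in `z`. The coefficients of the logarithmic derivative of index at least two are, up to
constants, the power sums `s k = ∑ i, l z i ^ k` with `k ≥ 3`; those of index zero and one are
`c₁ - s 1` and `2 * c₂ - s 2`. So the point is to show that `s 1` and `s 2` are holomorphic on every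
complex line (`differentiable_powerSum`). On a line the `s k` with `k ≥ 3` are entire of polynomial
growth, hence polynomials. The Hankel matrix of `s 3, s 4, …` of size `N + 1` is singular, so the
sequence satisfies a linear recurrence with polynomial coefficients whose lowest coefficient is
nonzero, and the recurrence extends down to `s 2` and `s 1` (`exists_recurrence`). This makes
`s 2` and `s 1` meromorphic. They are also continuous, by compactness and since the power sums of
index at least three determine the others (`continuous_powerSum`), and therefore entire.

Hence `c₁` and `c₂` are holomorphic on lines with growth of degree one and two, and Liouville's
theorem on `ℂ^d` shows that `c₁ + c₂` is a polynomial of degree at most two. Finally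
`ψ * exp (-(c₁ + c₂)) = ∏ i, (1 - l z i)` is holomorphic with growth of degree `N`, so it is a
polynomial of degree at most `N`.
-/

namespace FewZeros

/-! ### Factorization on a single line -/

/-- An entire function of growth `(1 + ‖w‖) ^ α` with real `α < m + 1` is a polynomial of degree at
most `m`, by the Cauchy estimates. -/
theorem liouville_poly {f : ℂ → ℂ} (hf : Differentiable ℂ f) {K α : ℝ} (m : ℕ)
    (hα : α < m + 1) (hb : ∀ w, ‖f w‖ ≤ K * (1 + ‖w‖) ^ α) :
    ∃ p : Polynomial ℂ, p.natDegree ≤ m ∧ ∀ w, f w = p.eval w := by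
  have hz : ∀ k, m < k → iteratedDeriv k f 0 = 0 := by
    intro k hk
    have hk' : α < k := lt_of_lt_of_le hα (by exact_mod_cast hk)
    have hest : ∀ R : ℝ, 0 < R →
        ‖iteratedDeriv k f 0‖ ≤ k.factorial * (K * (1 + R) ^ α) / R ^ k := fun R hR =>
      Complex.norm_iteratedDeriv_le_of_forall_mem_sphere_norm_le k hR hf.diffContOnCl
        (fun z hz => by simpa [mem_sphere_zero_iff_norm.1 hz] using hb z)
    have hlim : Filter.Tendsto (fun R : ℝ => k.factorial * (K * (1 + R) ^ α) / R ^ k)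
        Filter.atTop (nhds 0) := by
      have h1 : Filter.Tendsto (fun R : ℝ => (1 + R) ^ (-((k : ℝ) - α))) Filter.atTop (nhds 0) :=
        (tendsto_rpow_neg_atTop (by linarith)).comp
          (Filter.tendsto_atTop_add_const_left _ 1 Filter.tendsto_id)
      have h2 : Filter.Tendsto (fun R : ℝ => ((1 + R) / R) ^ k) Filter.atTop (nhds (1 ^ k)) := by
        have h3 : Filter.Tendsto (fun R : ℝ => R⁻¹ + 1) Filter.atTop (nhds (0 + 1)) :=
          tendsto_inv_atTop_zero.add_const 1
        rw [zero_add] at h3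
        refine (h3.congr' ?_).pow k
        filter_upwards [Filter.eventually_gt_atTop 0] with R hR
        field_simp
      have h4 := (h1.mul h2).const_mul (k.factorial * K)
      rw [zero_mul, mul_zero] at h4
      refine h4.congr' ?_
      filter_upwards [Filter.eventually_gt_atTop 0] with R hR
      rw [neg_sub, Real.rpow_sub (by linarith), Real.rpow_natCast, div_pow]
      field_simp
    have := ge_of_tendsto hlim (Filter.eventually_atTop.2
      ⟨1, fun R hR => hest R (by linarith)⟩)
    simpa using this
  refine ⟨∑ k ∈ Finset.range (m + 1),
    Polynomial.C ((k.factorial : ℂ)⁻¹ * iteratedDeriv k f 0) * Polynomial.X ^ k, ?_, fun w => ?_⟩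
  · refine Polynomial.natDegree_sum_le_of_forall_le _ _ fun k hk => ?_
    exact (Polynomial.natDegree_C_mul_X_pow_le _ _).trans (by simpa [Nat.lt_succ_iff] using hk)
  · rw [← Complex.taylorSeries_eq_of_entire' 0 w hf, tsum_eq_sum (s := Finset.range (m + 1))]
    · simp [Polynomial.eval_finsetSum]
    · intro k hk
      rw [hz k (by simpa using hk)]
      simp

/-- A polynomial of degree at most `N` that does not vanish at `0` has exactly `N` reciprocal roots
`l i`, where `l i = 0` stands for a root at infinity. -/
theorem exists_lambda (N : ℕ) : ∀ p : Polynomial ℂ, p.natDegree ≤ N → p.eval 0 ≠ 0 →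
    ∃ l : Fin N → ℂ, ∀ t, p.eval t = p.eval 0 * ∏ i, (1 - l i * t) := by
  induction N with
  | zero =>
    intro p hp _
    rw [Polynomial.eq_C_of_natDegree_le_zero hp]
    exact ⟨fun _ => 0, by simp⟩
  | succ n ih =>
    intro p hp h0
    by_cases hd : p.degree = 0
    · refine ⟨fun _ => 0, ?_⟩
      rw [Polynomial.eq_C_of_degree_eq_zero hd]
      simp
    · obtain ⟨r, hr⟩ := IsAlgClosed.exists_root p hd
      obtain ⟨q, rfl⟩ := Polynomial.dvd_iff_isRoot.2 hr
      have hp0 : (Polynomial.X - Polynomial.C r) * q ≠ 0 := by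
        rintro h; rw [h] at h0; simp at h0
      have hq0 : q ≠ 0 := right_ne_zero_of_mul hp0
      rw [Polynomial.natDegree_mul (Polynomial.X_sub_C_ne_zero r) hq0,
        Polynomial.natDegree_X_sub_C] at hp
      have hr0 : r ≠ 0 := by rintro rfl; simp at h0
      have hq : q.eval 0 ≠ 0 := by intro h; simp [h] at h0
      obtain ⟨l, hl⟩ := ih q (by omega) hq
      refine ⟨Fin.cons r⁻¹ l, fun t => ?_⟩
      rw [Fin.prod_univ_succ]
      simp only [Polynomial.eval_mul, Polynomial.eval_sub, Polynomial.eval_X, Polynomial.eval_C,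
        Fin.cons_zero, Fin.cons_succ, hl t]
      field_simp
      ring

theorem exists_entire_log {h : ℂ → ℂ} (hd : Differentiable ℂ h) (h0 : ∀ t, h t ≠ 0)
    (h1 : h 0 = 1) : ∃ q : ℂ → ℂ, Differentiable ℂ q ∧ q 0 = 0 ∧ ∀ t, h t = Complex.exp (q t) := by
  have hdd : Differentiable ℂ (deriv h) :=
    (hd.contDiff (n := 2)).differentiable_deriv_two
  have hdq : Differentiable ℂ (fun t => deriv h t / h t) := hdd.div hd h0
  obtain ⟨q, hq0, hq⟩ := hdq.isExactOn_univ.with_val_at 0 0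
  have hq' : ∀ t, HasDerivAt q (deriv h t / h t) t := fun t => hq t (Set.mem_univ _)
  refine ⟨q, fun t => (hq' t).differentiableAt, hq0, fun t => ?_⟩
  have hder : ∀ t, HasDerivAt (fun t => h t * Complex.exp (-q t)) 0 t := by
    intro t
    have hneg : HasDerivAt (fun t => -q t) (-(deriv h t / h t)) t := (hq' t).neg
    have hprod := (hd t).hasDerivAt.mul hneg.cexp
    have hval : deriv h t * Complex.exp (-q t)
        + h t * (Complex.exp (-q t) * -(deriv h t / h t)) = 0 := by
      have := h0 t
      field_simp
      ring
    rwa [hval] at hprod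
  have hc := is_const_of_deriv_eq_zero (fun t => (hder t).differentiableAt)
    (fun t => (hder t).deriv) t 0
  simp only [h1, hq0, neg_zero, Complex.exp_zero, mul_one] at hc
  rw [Complex.exp_neg] at hc
  have := Complex.exp_ne_zero (q t)
  field_simp at hc
  exact hc

/-- Growth of exponent `5 / 2 < 3` forces the logarithm of the zero-free part to be a polynomial of
degree at most two. -/
theorem line_factor {N : ℕ} {f : ℂ → ℂ} (f0 : f 0 = 1) {K A : ℝ}
    (hb : ∀ t, ‖f t‖ ≤ K * Real.exp (A * (1 + ‖t‖) ^ (5 / 2 : ℝ)))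
    {p : Polynomial ℂ} {h : ℂ → ℂ} (hp : p.natDegree ≤ N) (hd : Differentiable ℂ h)
    (h0 : ∀ t, h t ≠ 0) (hf : ∀ t, f t = p.eval t * h t) :
    ∃ (l : Fin N → ℂ) (c₁ c₂ : ℂ), ∀ t,
      f t = (∏ i, (1 - l i * t)) * Complex.exp (c₁ * t + c₂ * t ^ 2) := by
  have hp0 : p.eval 0 ≠ 0 := by intro h'; have := hf 0; simp [f0, h'] at this
  obtain ⟨l, hl⟩ := exists_lambda N p hp hp0
  obtain ⟨q, hqd, hq0, hq⟩ := exists_entire_log (h := fun t => p.eval 0 * h t)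
    (hd.const_mul _) (fun t => mul_ne_zero hp0 (h0 t)) (by rw [← hf, f0])
  have hfq : ∀ t, f t = (∏ i, (1 - l i * t)) * Complex.exp (q t) := by
    intro t; rw [hf, ← hq, hl]; ring
  -- outside a large disc every factor `1 - l i * t` has modulus at least one
  obtain ⟨R, hR⟩ : ∃ R : ℝ, ∀ t : ℂ, R ≤ ‖t‖ → 1 ≤ ‖∏ i, (1 - l i * t)‖ := by
    refine ⟨∑ i, 2 * ‖l i‖⁻¹, fun t ht => ?_⟩
    rw [norm_prod]
    refine Finset.one_le_prod fun i _ => ?_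
    by_cases hi : l i = 0
    · simp [hi]
    · have h1 : 2 * ‖l i‖⁻¹ ≤ ‖t‖ := le_trans
        (Finset.single_le_sum (f := fun i => 2 * ‖l i‖⁻¹) (fun i _ => by positivity)
          (Finset.mem_univ i)) ht
      have h2 : 2 ≤ ‖l i * t‖ := by
        rw [norm_mul]
        have : 0 < ‖l i‖ := norm_pos_iff.2 hi
        calc (2 : ℝ) = ‖l i‖ * (2 * ‖l i‖⁻¹) := by field_simp
          _ ≤ _ := by gcongr
      have h3 := norm_sub_norm_le (l i * t) 1
      rw [norm_one, norm_sub_rev] at h3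
      linarith
  obtain ⟨M, hM⟩ := (isCompact_closedBall (0 : ℂ) R).exists_bound_of_continuousOn
    hqd.continuous.continuousOn
  have hpow : ∀ t : ℂ, 1 ≤ (1 + ‖t‖) ^ (5 / 2 : ℝ) := fun t =>
    Real.one_le_rpow (by linarith [norm_nonneg t]) (by norm_num)
  obtain ⟨B, hB, hre⟩ : ∃ B : ℝ, 0 < B ∧ ∀ t, (q t).re ≤ B * (1 + ‖t‖) ^ (5 / 2 : ℝ) := by
    refine ⟨|M| + Real.log (max K 1) + |A| + 1, ?_, fun t => ?_⟩
    · have := Real.log_nonneg (le_max_right K 1)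
      positivity
    have hlog := Real.log_nonneg (le_max_right K 1)
    have hX := hpow t
    rcases le_total R ‖t‖ with ht | ht
    · have h1 : Real.exp (q t).re ≤ max K 1 * Real.exp (A * (1 + ‖t‖) ^ (5 / 2 : ℝ)) := by
        calc Real.exp (q t).re = ‖Complex.exp (q t)‖ := (Complex.norm_exp _).symm
          _ ≤ ‖∏ i, (1 - l i * t)‖ * ‖Complex.exp (q t)‖ :=
            le_mul_of_one_le_left (norm_nonneg _) (hR t ht)
          _ = ‖f t‖ := by rw [hfq, norm_mul]
          _ ≤ _ := (hb t).trans (by gcongr; exact le_max_left _ _)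
      have h2 := Real.log_le_log (Real.exp_pos _) h1
      rw [Real.log_exp, Real.log_mul (by positivity) (Real.exp_pos _).ne', Real.log_exp] at h2
      nlinarith [le_abs_self A, abs_nonneg M, abs_nonneg A]
    · have h1 := hM t (by simpa using ht)
      have h2 := Complex.re_le_norm (q t)
      nlinarith [le_abs_self M, abs_nonneg M, abs_nonneg A]
  have hqb : ∀ t, ‖q t‖ ≤ (2 * B * 2 ^ (5 / 2 : ℝ)) * (1 + ‖t‖) ^ (5 / 2 : ℝ) := by
    intro t
    have htn := norm_nonneg t
    have hBC := Complex.borelCaratheodory_zero (f := q) (z := t) (R := 2 * ‖t‖ + 1)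
      (M := B * (2 * (1 + ‖t‖)) ^ (5 / 2 : ℝ)) (by positivity) hqd.differentiableOn
      (fun s hs => by
        refine (hre s).trans ?_
        have : ‖s‖ < 2 * ‖t‖ + 1 := by simpa using hs
        gcongr
        linarith) (by positivity) (by simp; linarith) hq0
    refine hBC.trans ?_
    rw [Real.mul_rpow (by norm_num) (by positivity), mul_div_assoc]
    have : ‖t‖ / (2 * ‖t‖ + 1 - ‖t‖) ≤ 1 := by
      rw [div_le_one (by linarith)]; linarith
    calc _ ≤ 2 * (B * (2 ^ (5 / 2 : ℝ) * (1 + ‖t‖) ^ (5 / 2 : ℝ))) * 1 := by gcongr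
      _ = _ := by ring
  obtain ⟨r, hr, hqr⟩ := liouville_poly hqd 2 (by norm_num) hqb
  refine ⟨l, r.coeff 1, r.coeff 2, fun t => ?_⟩
  have hr0 : r.coeff 0 = 0 := by rw [Polynomial.coeff_zero_eq_eval_zero, ← hqr, hq0]
  rw [hfq, hqr, Polynomial.eval_eq_sum_range' (Nat.lt_succ_of_le hr)]
  simp [Finset.sum_range_succ, hr0]

/-! ### Power sums -/

/-- Interpolation at the values of `l`: the power `l i ^ m` is `l i ^ M` times a polynomial in `l i`
that does not depend on `i`. Both exponents are positive, so the values `l i = 0` are harmless. -/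
theorem exists_pow_shift {ι : Type*} [Fintype ι] (l : ι → ℂ) (M m : ℕ) (hM : 1 ≤ M) (hm : 1 ≤ m) :
    ∃ p : Polynomial ℂ, p.natDegree ≤ Fintype.card ι ∧
      ∀ i, l i ^ M * p.eval (l i) = l i ^ m := by
  classical
  set T : Finset ℂ := Finset.univ.image l with hT
  refine ⟨Lagrange.interpolate T id (fun x => x ^ m / x ^ M), ?_, fun i => ?_⟩
  · refine Polynomial.natDegree_le_of_degree_le ?_
    refine (Lagrange.degree_interpolate_le _ Function.injective_id.injOn).trans ?_
    have : T.card ≤ Fintype.card ι := Finset.card_image_le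
    exact_mod_cast (Nat.sub_le _ _).trans this
  · have h := Lagrange.eval_interpolate_at_node (s := T) (v := id) (fun x => x ^ m / x ^ M)
      Function.injective_id.injOn (i := l i) (by simp [hT])
    simp only [id] at h
    rw [h]
    by_cases h0 : l i = 0
    · simp [h0, show M ≠ 0 by omega, show m ≠ 0 by omega]
    · field_simp

theorem sum_pow_mul_eval {ι : Type*} [Fintype ι] (l : ι → ℂ) (c : ι → ℂ) (p : Polynomial ℂ) {n : ℕ}
    (hn : p.natDegree ≤ n) :
    ∑ i, c i * p.eval (l i) = ∑ k ∈ Finset.range (n + 1), p.coeff k * ∑ i, c i * l i ^ k := by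
  simp_rw [Polynomial.eval_eq_sum_range' (Nat.lt_succ_of_le hn), Finset.mul_sum]
  rw [Finset.sum_comm]
  refine Finset.sum_congr rfl fun k _ => Finset.sum_congr rfl fun i _ => by ring

/-- The power sums of index at least three determine those of index one and two. -/
theorem powerSum_unique {N : ℕ} (l μ : Fin N → ℂ)
    (h : ∀ k, 3 ≤ k → ∑ i, l i ^ k = ∑ i, μ i ^ k) (m : ℕ) (hm : 1 ≤ m) :
    ∑ i, l i ^ m = ∑ i, μ i ^ m := by
  obtain ⟨p, -, hp⟩ := exists_pow_shift (Sum.elim l μ) 3 m (by norm_num) hm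
  have h1 : ∀ i, l i ^ m = l i ^ 3 * p.eval (l i) := fun i => (hp (Sum.inl i)).symm
  have h2 : ∀ i, μ i ^ m = μ i ^ 3 * p.eval (μ i) := fun i => (hp (Sum.inr i)).symm
  simp_rw [h1, h2, sum_pow_mul_eval _ _ p le_rfl, ← pow_add]
  refine Finset.sum_congr rfl fun k _ => ?_
  rw [h _ (by omega)]

/-- Along an ultrafilter converging to `w₀` the bounded tuple `l w` has a limit `μ`; its power sums of
index at least three agree with those of `l w₀` by continuity, hence so do all others. -/
theorem continuous_powerSum {N : ℕ} {l : ℂ → Fin N → ℂ} {K : ℝ}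
    (hb : ∀ w i, ‖l w i‖ ≤ K * (1 + ‖w‖))
    (hc : ∀ k, 3 ≤ k → Continuous fun w => ∑ i, l w i ^ k) (m : ℕ) (hm : 1 ≤ m) :
    Continuous fun w => ∑ i, l w i ^ m := by
  refine continuous_iff_continuousAt.2 fun w₀ => ?_
  refine Filter.tendsto_iff_ultrafilter _ _ _ |>.2 fun U hU => ?_
  have hcpt : IsCompact (Metric.closedBall (0 : Fin N → ℂ) (|K| * (2 + ‖w₀‖))) :=
    isCompact_closedBall _ _
  have hmem : ∀ᶠ w in (U : Filter ℂ),
      l w ∈ Metric.closedBall (0 : Fin N → ℂ) (|K| * (2 + ‖w₀‖)) := by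
    filter_upwards [hU (Metric.ball_mem_nhds w₀ one_pos)] with w hw
    rw [mem_closedBall_zero_iff, pi_norm_le_iff_of_nonneg (by positivity)]
    intro i
    have h1 : ‖w‖ ≤ 1 + ‖w₀‖ := by
      have h2 := norm_sub_norm_le w w₀
      have : ‖w - w₀‖ < 1 := by simpa [dist_eq_norm] using hw
      linarith
    calc ‖l w i‖ ≤ K * (1 + ‖w‖) := hb w i
      _ ≤ |K| * (1 + ‖w‖) := by gcongr; exact le_abs_self K
      _ ≤ |K| * (2 + ‖w₀‖) := mul_le_mul_of_nonneg_left (by linarith) (abs_nonneg K)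
  obtain ⟨μ, -, hμ⟩ := hcpt.ultrafilter_le_nhds (U.map l) (Filter.le_principal_iff.2 hmem)
  have hμ' : Filter.Tendsto l U (nhds μ) := hμ
  have hlim : ∀ k, Filter.Tendsto (fun w => ∑ i, l w i ^ k) U (nhds (∑ i, μ i ^ k)) := fun k =>
    tendsto_finsetSum _ fun i _ => ((tendsto_pi_nhds.1 hμ') i).pow k
  have heq : ∑ i, l w₀ i ^ m = ∑ i, μ i ^ m := powerSum_unique _ _ (fun k hk =>
    tendsto_nhds_unique (((hc k hk).tendsto w₀).mono_left hU) (hlim k)) m hm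
  simpa only [heq] using hlim m

/-- If the power sums of index at least three depend polynomially on `w`, then all power sums of
positive index satisfy a linear recurrence with polynomial coefficients and nonzero lowest
coefficient. It comes from a kernel vector of the singular Hankel matrix `(s (3 + i + j))`. -/
theorem exists_recurrence {N : ℕ} {l : ℂ → Fin N → ℂ} {S : ℕ → Polynomial ℂ}
    (hS : ∀ k, 3 ≤ k → ∀ w, (S k).eval w = ∑ i, l w i ^ k) :
    ∃ (n : ℕ) (b : ℕ → Polynomial ℂ), b 0 ≠ 0 ∧ ∀ m, 1 ≤ m → ∀ w,
      ∑ j ∈ Finset.range (n + 1), (b j).eval w * ∑ i, l w i ^ (m + j) = 0 := by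
  classical
  set H : Matrix (Fin (N + 1)) (Fin (N + 1)) (Polynomial ℂ) :=
    fun i j => S (3 + i + j) with hH
  have hdet : H.det = 0 := by
    refine Polynomial.funext fun w => ?_
    rw [Polynomial.eval_zero, ← Polynomial.coe_evalRingHom, RingHom.map_det]
    refine Matrix.exists_mulVec_eq_zero_iff.1 ?_
    set P : Polynomial ℂ := ∏ i, (Polynomial.X - Polynomial.C (l w i)) with hP
    have hdeg : P.natDegree = N := by
      rw [hP, Polynomial.natDegree_prod_of_monic _ _ fun i _ => Polynomial.monic_X_sub_C _]
      simp
    have hmonic : P.Monic := Polynomial.monic_prod_of_monic _ _ fun i _ => Polynomial.monic_X_sub_C _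
    -- the coefficients of the polynomial with roots `l w i` form a kernel vector of the matrix at `w`
    refine ⟨fun j => P.coeff j, fun h => ?_, funext fun i => ?_⟩
    · have h1 := congrFun h (Fin.last N)
      have h2 : P.coeff N = 1 := by rw [← hdeg]; exact hmonic
      simp [h2] at h1
    · have h1 := sum_pow_mul_eval (l w) (fun k => l w k ^ (3 + (i : ℕ))) P hdeg.le
      have h2 : ∀ k, P.eval (l w k) = 0 := by
        intro k
        rw [hP, Polynomial.eval_prod]
        exact Finset.prod_eq_zero (Finset.mem_univ k) (by simp)
      simp only [h2, mul_zero, Finset.sum_const_zero, ← pow_add] at h1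
      rw [Finset.sum_range] at h1
      simp only [Matrix.mulVec, dotProduct, Pi.zero_apply, RingHom.mapMatrix_apply,
        Matrix.map_apply, Polynomial.coe_evalRingHom]
      rw [h1]
      refine Finset.sum_congr rfl fun j _ => ?_
      rw [hH, hS _ (by omega), mul_comm]
  obtain ⟨v, hv0, hv⟩ := Matrix.exists_mulVec_eq_zero_iff.2 hdet
  -- extend `v` by zero to all of `ℕ`, and shift it so that its first entry is nonzero
  set u : ℕ → Polynomial ℂ := fun j => if h : j < N + 1 then v ⟨j, h⟩ else 0 with hu
  have huv : ∀ j : Fin (N + 1), u j = v j := fun j => by rw [hu]; exact dif_pos j.2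
  have hex : ∃ j, u j ≠ 0 := by
    obtain ⟨j, hj⟩ := Function.ne_iff.1 hv0
    exact ⟨j, by rw [huv]; exact hj⟩
  set r := Nat.find hex with hr
  have hrlt : ∀ j < r, u j = 0 := fun j hj => not_not.1 (Nat.find_min hex hj)
  have hurec : ∀ k, k ≤ N → ∀ w,
      ∑ j ∈ Finset.range (N + 1), (u j).eval w * ∑ i, l w i ^ (3 + k + j) = 0 := by
    intro k hk w
    have h1 := congrArg (Polynomial.eval w) (congrFun hv ⟨k, by omega⟩)
    simp only [Matrix.mulVec, dotProduct, Polynomial.eval_finsetSum, Polynomial.eval_mul,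
      Pi.zero_apply, Polynomial.eval_zero, hH] at h1
    rw [← h1, Finset.sum_range]
    refine Finset.sum_congr rfl fun j _ => ?_
    rw [hS _ (by omega), mul_comm, huv]
  have hshift : ∀ w (c : ℕ), ∑ j ∈ Finset.range (N + 1), (u j).eval w * ∑ i, l w i ^ (c + j) =
      ∑ j ∈ Finset.range (N + 1), (u (r + j)).eval w * ∑ i, l w i ^ (c + r + j) := by
    intro w c
    have h1 : ∑ j ∈ Finset.range (r + (N + 1)), (u j).eval w * ∑ i, l w i ^ (c + j) =
        ∑ j ∈ Finset.range (N + 1), (u j).eval w * ∑ i, l w i ^ (c + j) := by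
      symm
      refine Finset.sum_subset (by intro x; simp; omega) fun j _ hj => ?_
      have : u j = 0 := by
        rw [hu]
        exact dif_neg (by simpa using hj)
      simp [this]
    rw [← h1, Finset.sum_range_add]
    rw [Finset.sum_eq_zero fun j hj => by rw [hrlt j (Finset.mem_range.1 hj)]; simp, zero_add]
    simp_rw [add_assoc]
  refine ⟨N, fun j => u (r + j), Nat.find_spec hex, fun m hm w => ?_⟩
  obtain ⟨p, hpd, hp⟩ := exists_pow_shift (l w) (3 + r) m (by omega) hm
  rw [Fintype.card_fin] at hpd
  have h1 : ∀ j, ∑ i, l w i ^ (m + j) =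
      ∑ k ∈ Finset.range (N + 1), p.coeff k * ∑ i, l w i ^ (3 + k + r + j) := by
    intro j
    calc ∑ i, l w i ^ (m + j) = ∑ i, l w i ^ (3 + r + j) * p.eval (l w i) := by
          refine Finset.sum_congr rfl fun i _ => ?_
          rw [pow_add, ← hp i]; ring
      _ = _ := by
          rw [sum_pow_mul_eval _ _ p hpd]
          refine Finset.sum_congr rfl fun k _ => ?_
          congr 1
          refine Finset.sum_congr rfl fun i _ => ?_
          ring
  simp_rw [h1, Finset.mul_sum]
  simp_rw [← Finset.mul_sum]
  calc _ = ∑ k ∈ Finset.range (N + 1), p.coeff k *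
        ∑ j ∈ Finset.range (N + 1), (u (r + j)).eval w * ∑ i, l w i ^ (3 + k + r + j) := by
        simp_rw [Finset.mul_sum (s := Finset.range (N + 1))]
        rw [Finset.sum_comm]
        refine Finset.sum_congr rfl fun k _ => Finset.sum_congr rfl fun j _ => by ring
    _ = 0 := by
        refine Finset.sum_eq_zero fun k hk => ?_
        rw [← hshift w (3 + k), hurec k (by simpa [Nat.lt_succ_iff] using hk) w, mul_zero]

/-- A continuous function that becomes entire after multiplication by a nonzero polynomial is entire:
the zeros of the polynomial are removable singularities. -/
theorem differentiable_of_mul {f : ℂ → ℂ} (hf : Continuous f) {b : Polynomial ℂ} (hb : b ≠ 0)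
    (hd : Differentiable ℂ fun w => b.eval w * f w) : Differentiable ℂ f := by
  intro w
  have hfin : {w : ℂ | b.IsRoot w}.Countable := (Polynomial.finite_setOfPred_isRoot hb).countable
  have h := Complex.hasFPowerSeriesOnBall_of_differentiable_off_countable (R := 1) (c := w) hfin
    hf.continuousOn (fun z hz => by
      have hz' : b.eval z ≠ 0 := hz.2
      have h1 : DifferentiableAt ℂ (fun w => (b.eval w * f w) / b.eval w) z :=
        (hd z).div b.differentiable.differentiableAt hz'
      refine h1.congr_of_eventuallyEq ?_
      filter_upwards [b.continuous.continuousAt.eventually_ne hz'] with y hy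
      field_simp) one_pos
  exact h.analyticAt.differentiableAt

/-- Entire power sums of index at least three, for a tuple of linear growth, force the power sums of
index two and one to be entire. -/
theorem differentiable_powerSum {N : ℕ} {l : ℂ → Fin N → ℂ} {K : ℝ}
    (hb : ∀ w i, ‖l w i‖ ≤ K * (1 + ‖w‖))
    (hd : ∀ k, 3 ≤ k → Differentiable ℂ fun w => ∑ i, l w i ^ k) (m : ℕ) (hm : 1 ≤ m) :
    Differentiable ℂ fun w => ∑ i, l w i ^ m := by
  have hpoly : ∀ k, ∃ p : Polynomial ℂ, 3 ≤ k → ∀ w, p.eval w = ∑ i, l w i ^ k := by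
    intro k
    by_cases hk : 3 ≤ k
    · obtain ⟨p, -, hp⟩ := liouville_poly (hd k hk) (K := N * K ^ k) (α := k) k (by simp)
        (fun w => by
          refine (norm_sum_le _ _).trans ?_
          calc ∑ i, ‖l w i ^ k‖ ≤ ∑ _i : Fin N, (K * (1 + ‖w‖)) ^ k := by
                gcongr with i
                rw [norm_pow]
                gcongr
                exact hb w i
            _ = _ := by simp [mul_pow, mul_assoc])
      exact ⟨p, fun _ w => (hp w).symm⟩
    · exact ⟨0, fun h => absurd h hk⟩
  choose S hS using hpoly
  obtain ⟨n, b, hb0, hrec⟩ := exists_recurrence hS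
  have hcont := continuous_powerSum hb fun k hk => (hd k hk).continuous
  have hstep : ∀ m, 1 ≤ m → (∀ k, m < k → Differentiable ℂ fun w => ∑ i, l w i ^ k) →
      Differentiable ℂ fun w => ∑ i, l w i ^ m := by
    intro m hm hk
    refine differentiable_of_mul (hcont m hm) hb0 ?_
    have : (fun w => (b 0).eval w * ∑ i, l w i ^ m) = fun w =>
        -∑ j ∈ Finset.range n, (b (j + 1)).eval w * ∑ i, l w i ^ (m + (j + 1)) := by
      funext w
      have h1 := hrec m hm w
      rw [Finset.sum_range_succ'] at h1
      exact eq_neg_of_add_eq_zero_right h1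
    rw [this]
    refine (Differentiable.fun_sum fun j _ => ?_).neg
    exact (b (j + 1)).differentiable.mul (hk _ (by omega))
  have h2 : ∀ k, 2 ≤ k → Differentiable ℂ fun w => ∑ i, l w i ^ k := by
    intro k hk
    rcases hk.eq_or_lt with rfl | h
    · exact hstep 2 (by norm_num) fun k hk => hd k hk
    · exact hd k h
  rcases hm.eq_or_lt with rfl | h
  · exact hstep 1 le_rfl fun k hk => h2 k hk
  · exact h2 m h

/-! ### Dependence of the factorization on the line -/

theorem differentiable_integral_param {F : ℝ → ℂ → ℂ} (hc : Continuous (Function.uncurry F))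
    (hd : ∀ θ, Differentiable ℂ (F θ)) (a b : ℝ) :
    Differentiable ℂ fun w => ∫ θ in a..b, F θ w := by
  intro w₀
  obtain ⟨M, hM⟩ := (isCompact_uIcc (a := a) (b := b)).prod (isCompact_closedBall w₀ 2)
    |>.exists_bound_of_continuousOn hc.continuousOn
  have hcθ : ∀ w, Continuous fun θ => F θ w := fun w =>
    hc.comp (continuous_id.prodMk continuous_const)
  have h := intervalIntegral.hasDerivAt_integral_of_dominated_loc_of_deriv_le
    (μ := volume) (a := a) (b := b) (F := fun w θ => F θ w) (F' := fun w θ => deriv (F θ) w)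
    (x₀ := w₀) (s := Metric.ball w₀ 1) (bound := fun _ => M) (Metric.ball_mem_nhds _ one_pos)
    (Filter.Eventually.of_forall fun w => (hcθ w).aestronglyMeasurable)
    ((hcθ w₀).intervalIntegrable _ _)
    (((measurable_deriv_with_param hc).comp
      (measurable_id.prodMk measurable_const)).aestronglyMeasurable)
    (Filter.Eventually.of_forall fun θ hθ w hw => by
      have h1 := Complex.norm_deriv_le_of_forall_mem_sphere_norm_le (c := w) (R := 1) (C := M)
        one_pos (hd θ).diffContOnCl (fun z hz => hM (θ, z) ⟨Set.uIoc_subset_uIcc hθ, by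
          have h2 : dist z w = 1 := hz
          have h3 : dist w w₀ < 1 := hw
          have h4 := dist_triangle z w w₀
          rw [Metric.mem_closedBall]
          linarith⟩)
      simpa using h1)
    (by simp)
    (Filter.Eventually.of_forall fun θ _ w _ => (hd θ w).hasDerivAt)
  exact h.2.differentiableAt

section Core

variable {E : Type*} [NormedAddCommGroup E] [NormedSpace ℂ E]

/-- A function is line-holomorphic if its restriction to every complex line is entire. -/
def LineHol (f : E → ℂ) : Prop := ∀ a b : E, Differentiable ℂ fun w : ℂ => f (a + w • b)

theorem lineHol_of_differentiable {f : E → ℂ} (hf : Differentiable ℂ f) : LineHol f :=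
  fun a b => hf.comp ((differentiable_const a).add (differentiable_id.smul_const b))

/-- The Taylor coefficients of `t ↦ ψ (t z)` at `0` are line-holomorphic in `z`, by Cauchy's integral
formula on the unit circle. -/
theorem lineHol_taylor {ψ : E → ℂ} (hψ : Differentiable ℂ ψ) (k : ℕ) :
    LineHol fun z => iteratedDeriv k (fun t : ℂ => ψ (t • z)) 0 := by
  intro a b
  have hform : ∀ z : E, iteratedDeriv k (fun t : ℂ => ψ (t • z)) 0 =
      (2 * Real.pi * Complex.I / k.factorial)⁻¹ * ∫ θ in (0 : ℝ)..2 * Real.pi,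
        deriv (circleMap 0 1) θ * ((1 / (circleMap 0 1 θ - 0) ^ (k + 1)) *
          ψ (circleMap 0 1 θ • z)) := by
    intro z
    have hdz : Differentiable ℂ fun t : ℂ => ψ (t • z) := hψ.comp (differentiable_id.smul_const z)
    have h1 := DiffContOnCl.circleIntegral_one_div_sub_center_pow_smul (R := 1) (c := 0)
      one_pos k hdz.diffContOnCl
    have hne : (2 * Real.pi * Complex.I / k.factorial : ℂ) ≠ 0 := by
      simp [Real.pi_ne_zero, Complex.I_ne_zero, Nat.factorial_ne_zero]
    rw [eq_inv_mul_iff_mul_eq₀ hne]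
    simpa [circleIntegral] using h1.symm
  simp_rw [hform]
  refine (differentiable_integral_param (F := fun θ w => deriv (circleMap 0 1) θ *
    ((1 / (circleMap 0 1 θ - 0) ^ (k + 1)) * ψ (circleMap 0 1 θ • (a + w • b)))) ?_ ?_ _ _).const_mul _
  · have hne : ∀ θ : ℝ, (circleMap 0 1 θ - 0) ^ (k + 1) ≠ 0 := fun θ => by simp
    have hcm : Continuous (circleMap 0 1) := continuous_circleMap 0 1
    have hψc := hψ.continuous
    have hinv : Continuous fun θ : ℝ => 1 / (circleMap 0 1 θ - 0) ^ (k + 1) :=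
      continuous_const.div ((hcm.sub continuous_const).pow _) hne
    simp only [deriv_circleMap]
    refine Continuous.mul (by fun_prop) ((hinv.comp continuous_fst).mul ?_)
    exact hψc.comp ((hcm.comp continuous_fst).smul (by fun_prop))
  · intro θ
    refine Differentiable.const_mul (Differentiable.const_mul ?_ _) _
    exact hψ.comp (by fun_prop)

theorem iteratedDeriv_inv_one_sub (c : ℂ) (k : ℕ) : ∀ t : ℂ, 1 - c * t ≠ 0 →
    iteratedDeriv k (fun t => (1 - c * t)⁻¹) t = k.factorial * c ^ k * ((1 - c * t)⁻¹) ^ (k + 1) := by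
  induction k with
  | zero => intro t _; simp
  | succ k ih =>
    intro t ht
    have hopen : ∀ᶠ s in nhds t, 1 - c * s ≠ 0 :=
      ContinuousAt.eventually_ne (by fun_prop) ht
    rw [iteratedDeriv_succ, Filter.EventuallyEq.deriv_eq (hopen.mono ih)]
    have h1 : HasDerivAt (fun s : ℂ => 1 - c * s) (-c) t := by
      simpa using ((hasDerivAt_id t).const_mul c).const_sub 1
    have h2 := ((h1.inv ht).pow (k + 1)).const_mul ((k.factorial : ℂ) * c ^ k)
    refine Eq.trans (HasDerivAt.deriv h2) ?_
    simp only [Nat.factorial_succ, Nat.cast_mul, Pi.inv_apply, Nat.add_sub_cancel,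
      div_eq_mul_inv, ← inv_pow]
    push_cast
    ring

/-- The logarithmic derivative of `(∏ i, (1 - l i * t)) * exp (c₁ * t + c₂ * t ^ 2)`. -/
noncomputable def logD {N : ℕ} (l : Fin N → ℂ) (c₁ c₂ : ℂ) (t : ℂ) : ℂ :=
  (c₁ + 2 * c₂ * t) - ∑ i, l i * (1 - l i * t)⁻¹

theorem eventually_factor_ne {N : ℕ} (l : Fin N → ℂ) :
    ∀ᶠ t in nhds (0 : ℂ), ∀ i, 1 - l i * t ≠ 0 :=
  Filter.eventually_all.2 fun i => ContinuousAt.eventually_ne (by fun_prop) (by simp)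

theorem contDiffAt_inv_factor (c : ℂ) (n : WithTop ℕ∞) :
    ContDiffAt ℂ n (fun t => c * (1 - c * t)⁻¹) 0 := by
  have : ContDiffAt ℂ n (fun t => 1 - c * t) 0 := by fun_prop
  exact contDiffAt_const.mul (this.inv (by simp))

theorem contDiffAt_logD {N : ℕ} (l : Fin N → ℂ) (c₁ c₂ : ℂ) (n : WithTop ℕ∞) :
    ContDiffAt ℂ n (logD l c₁ c₂) 0 :=
  ContDiffAt.sub (by fun_prop) (ContDiffAt.sum fun i _ => contDiffAt_inv_factor (l i) n)

/-- The derivatives at `0` of the logarithmic derivative are multiples of the power sums of `l`,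
corrected by `c₁` and `2 * c₂` at indices zero and one. -/
theorem iteratedDeriv_logD {N : ℕ} (l : Fin N → ℂ) (c₁ c₂ : ℂ) (k : ℕ) :
    iteratedDeriv k (logD l c₁ c₂) 0 =
      iteratedDeriv k (fun t : ℂ => c₁ + 2 * c₂ * t) 0 - k.factorial * ∑ i, l i ^ (k + 1) := by
  unfold logD
  rw [iteratedDeriv_fun_sub (by fun_prop) (ContDiffAt.sum fun i _ => contDiffAt_inv_factor (l i) k),
    iteratedDeriv_fun_sum fun i _ => contDiffAt_inv_factor (l i) k, Finset.mul_sum]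
  congr 1
  refine Finset.sum_congr rfl fun i _ => ?_
  rw [iteratedDeriv_const_mul_field, iteratedDeriv_inv_one_sub _ _ _ (by simp)]
  simp
  ring

theorem deriv_affine (c₁ c₂ : ℂ) : deriv (fun t : ℂ => c₁ + 2 * c₂ * t) = fun _ => 2 * c₂ := by
  funext t
  simp

theorem deriv_eq_mul_logD {N : ℕ} {f : ℂ → ℂ} {l : Fin N → ℂ} {c₁ c₂ : ℂ}
    (hf : ∀ t, f t = (∏ i, (1 - l i * t)) * Complex.exp (c₁ * t + c₂ * t ^ 2)) :
    deriv f =ᶠ[nhds 0] fun t => f t * logD l c₁ c₂ t := by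
  filter_upwards [eventually_factor_ne l] with t ht
  have hprod : ∏ i, (1 - l i * t) ≠ 0 := Finset.prod_ne_zero_iff.2 fun i _ => ht i
  have hft : f t ≠ 0 := by rw [hf]; exact mul_ne_zero hprod (Complex.exp_ne_zero _)
  have hlog : logDeriv f t = logD l c₁ c₂ t := by
    rw [funext hf, logDeriv_mul (f := fun t => ∏ i, (1 - l i * t))
        (g := fun t => Complex.exp (c₁ * t + c₂ * t ^ 2)) t hprod (Complex.exp_ne_zero _)
        (by fun_prop) (by fun_prop),
      logDeriv_prod (f := fun i t => 1 - l i * t) (fun i _ => ht i) (fun i _ => by fun_prop)]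
    have h1 : ∀ i, logDeriv (fun t => 1 - l i * t) t = -(l i * (1 - l i * t)⁻¹) := by
      intro i
      have h2 : HasDerivAt (fun s : ℂ => 1 - l i * s) (-l i) t := by
        simpa using ((hasDerivAt_id t).const_mul (l i)).const_sub 1
      rw [logDeriv_apply, h2.deriv]
      ring
    have h3 : HasDerivAt (fun t : ℂ => Complex.exp (c₁ * t + c₂ * t ^ 2))
        (Complex.exp (c₁ * t + c₂ * t ^ 2) * (c₁ + 2 * c₂ * t)) t := by
      have h4 : HasDerivAt (fun t : ℂ => c₁ * t + c₂ * t ^ 2) (c₁ + 2 * c₂ * t) t := by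
        have h5 := ((hasDerivAt_id t).const_mul c₁).add ((hasDerivAt_pow 2 t).const_mul c₂)
        refine h5.congr_deriv ?_
        simp
        ring
      exact h4.cexp
    simp only [h1]
    rw [logDeriv_apply, h3.deriv, mul_div_cancel_left₀ _ (Complex.exp_ne_zero _), logD,
      Finset.sum_neg_distrib]
    ring
  rw [← hlog, logDeriv_apply]
  field_simp

/-- In the factorization of `ψ` on the lines through the origin, the coefficients `c₁ z` and `c₂ z` are
line-holomorphic in `z` and have polynomial growth, and the reciprocal zeros grow linearly. -/
theorem core {ψ : E → ℂ} (hψ : Differentiable ℂ ψ) (h0 : ψ 0 = 1) {N : ℕ} {l : E → Fin N → ℂ}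
    {c₁ c₂ : E → ℂ} (hfac : ∀ z (t : ℂ), ψ (t • z) =
      (∏ i, (1 - l z i * t)) * Complex.exp (c₁ z * t + c₂ z * t ^ 2)) :
    LineHol c₁ ∧ LineHol c₂ ∧ ∃ K : ℝ, ∀ z, ‖c₁ z‖ ≤ K * (1 + ‖z‖) ^ 1 ∧
      ‖c₂ z‖ ≤ K * (1 + ‖z‖) ^ 2 ∧ ∀ i, ‖l z i‖ ≤ K * (1 + ‖z‖) := by
  obtain ⟨δ, hδ, hball⟩ : ∃ δ : ℝ, 0 < δ ∧ ∀ x : E, ‖x‖ < δ → ‖ψ x - 1‖ < 1 := by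
    obtain ⟨δ, hδ, h⟩ := Metric.continuousAt_iff.1 (hψ 0).continuousAt 1 one_pos
    exact ⟨δ, hδ, fun x hx => by simpa [h0, dist_eq_norm] using h (x := x) (by simpa using hx)⟩
  -- zeros on a line through the origin stay outside the ball of radius `δ`
  have hl : ∀ z i, ‖l z i‖ ≤ δ⁻¹ * (1 + ‖z‖) := by
    intro z i
    by_cases hi : l z i = 0
    · rw [hi, norm_zero]; positivity
    · have hz : ψ ((l z i)⁻¹ • z) = 0 := by
        rw [hfac, Finset.prod_eq_zero (Finset.mem_univ i) (by rw [mul_inv_cancel₀ hi, sub_self]),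
          zero_mul]
      have hge : δ ≤ ‖(l z i)⁻¹ • z‖ := by
        by_contra! hlt
        have := hball _ hlt
        rw [hz] at this
        simp at this
      have hpos : 0 < ‖l z i‖ := norm_pos_iff.2 hi
      rw [norm_smul, norm_inv, inv_mul_eq_div, le_div_iff₀ hpos] at hge
      rw [inv_mul_eq_div, le_div_iff₀ hδ]
      linarith
  set T : ℕ → E → ℂ := fun k z => iteratedDeriv k (fun t : ℂ => ψ (t • z)) 0 with hT
  have hTl : ∀ k, LineHol (T k) := lineHol_taylor hψ
  have hTb : ∀ k z, ‖T k z‖ ≤ k.factorial * 2 * δ⁻¹ ^ k * (1 + ‖z‖) ^ k := by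
    intro k z
    have hdz : Differentiable ℂ fun t : ℂ => ψ (t • z) := hψ.comp (differentiable_id.smul_const z)
    have hz1 : 0 < 1 + ‖z‖ := by positivity
    refine (Complex.norm_iteratedDeriv_le_of_forall_mem_sphere_norm_le (R := δ / (1 + ‖z‖)) (C := 2)
      k (by positivity) hdz.diffContOnCl fun t ht => ?_).trans (le_of_eq ?_)
    · have ht' : ‖t‖ = δ / (1 + ‖z‖) := by simpa using ht
      have hlt : ‖t • z‖ < δ := by
        rw [norm_smul, ht', div_mul_eq_mul_div, div_lt_iff₀ hz1]
        nlinarith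
      have h1 := hball _ hlt
      have h2 := norm_sub_norm_le (ψ (t • z)) 1
      rw [norm_one] at h2
      linarith
    · rw [div_pow, inv_pow]
      field_simp
  set G : ℕ → E → ℂ := fun k z => iteratedDeriv k (logD (l z) (c₁ z) (c₂ z)) 0 with hG
  -- Leibniz rule for the derivative `ψ * logD` of `ψ` along a line, together with `ψ 0 = 1`
  have hrec : ∀ k z, T (k + 1) z =
      G k z + ∑ i ∈ Finset.range k, (k.choose (i + 1) : ℂ) * T (i + 1) z * G (k - (i + 1)) z := by
    intro k z
    have hdz : Differentiable ℂ fun t : ℂ => ψ (t • z) := hψ.comp (differentiable_id.smul_const z)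
    have h1 : T (k + 1) z = iteratedDeriv k
        (fun t => ψ (t • z) * logD (l z) (c₁ z) (c₂ z) t) 0 := by
      rw [hT]
      simp only
      rw [iteratedDeriv_succ']
      exact (deriv_eq_mul_logD (hfac z)).iteratedDeriv_eq k
    rw [h1, iteratedDeriv_fun_mul hdz.contDiff.contDiffAt (contDiffAt_logD _ _ _ _),
      Finset.sum_range_succ']
    simp [hT, hG, h0, add_comm]
  have hGl : ∀ k, LineHol (G k) := by
    intro k
    induction k using Nat.strong_induction_on with
    | _ k ih =>
      intro a b
      have h1 : (fun w : ℂ => G k (a + w • b)) = fun w => T (k + 1) (a + w • b) -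
          ∑ i ∈ Finset.range k, (k.choose (i + 1) : ℂ) * T (i + 1) (a + w • b) *
            G (k - (i + 1)) (a + w • b) := by
        funext w
        rw [hrec k]
        ring
      rw [h1]
      refine (hTl (k + 1) a b).sub (Differentiable.fun_sum fun i hi => ?_)
      rw [Finset.mem_range] at hi
      exact ((hTl (i + 1) a b).const_mul _).mul (ih _ (by omega) a b)
  have hG0 : ∀ z, G 0 z = c₁ z - ∑ i, l z i ^ 1 := fun z => by
    simp [hG, iteratedDeriv_logD]
  have hG1 : ∀ z, G 1 z = 2 * c₂ z - ∑ i, l z i ^ 2 := fun z => by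
    simp [hG, iteratedDeriv_logD, iteratedDeriv_one]
  have hG2 : ∀ k, 2 ≤ k → ∀ z, G k z = -(k.factorial * ∑ i, l z i ^ (k + 1)) := by
    intro k hk z
    obtain ⟨j, rfl⟩ := Nat.exists_eq_add_of_le' hk
    simp only [hG, iteratedDeriv_logD]
    rw [iteratedDeriv_succ', iteratedDeriv_succ', deriv_affine]
    simp
  have hs : ∀ m, 1 ≤ m → LineHol fun z => ∑ i, l z i ^ m := by
    intro m hm a b
    refine differentiable_powerSum (l := fun w => l (a + w • b)) (K := δ⁻¹ * (1 + ‖a‖ + ‖b‖))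
      (fun w i => ?_) (fun k hk => ?_) m hm
    · refine (hl _ i).trans ?_
      rw [mul_assoc]
      gcongr
      have h1 := norm_add_le a (w • b)
      rw [norm_smul] at h1
      nlinarith [norm_nonneg a, norm_nonneg b, norm_nonneg w,
        mul_nonneg (norm_nonneg a) (norm_nonneg w)]
    · obtain ⟨j, rfl⟩ := Nat.exists_eq_add_of_le' hk
      have h1 : (fun w : ℂ => ∑ i, l (a + w • b) i ^ (j + 3)) =
          fun w => -((j + 2).factorial : ℂ)⁻¹ * G (j + 2) (a + w • b) := by
        funext w
        rw [hG2 _ (by omega)]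
        have : ((j + 2).factorial : ℂ) ≠ 0 := by exact_mod_cast Nat.factorial_ne_zero _
        field_simp
      rw [h1]
      exact (hGl (j + 2) a b).const_mul _
  have hsb : ∀ m z, ‖∑ i, l z i ^ m‖ ≤ N * δ⁻¹ ^ m * (1 + ‖z‖) ^ m := by
    intro m z
    refine (norm_sum_le _ _).trans ?_
    calc ∑ i, ‖l z i ^ m‖ ≤ ∑ _i : Fin N, (δ⁻¹ * (1 + ‖z‖)) ^ m := by
          gcongr with i
          rw [norm_pow]
          gcongr
          exact hl z i
      _ = _ := by simp [mul_pow, mul_assoc]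
  have hc1 : ∀ z, c₁ z = T 1 z + ∑ i, l z i ^ 1 := fun z => by
    have := hrec 0 z
    simp only [zero_add, Finset.range_zero, Finset.sum_empty, add_zero, hG0] at this
    rw [this]; ring
  have hc2 : ∀ z, c₂ z = 2⁻¹ * (T 2 z - T 1 z * T 1 z + ∑ i, l z i ^ 2) := fun z => by
    have h1 := hrec 0 z
    have h2 := hrec 1 z
    simp only [zero_add, Finset.range_zero, Finset.sum_empty, add_zero] at h1
    simp only [Finset.range_one, Finset.sum_singleton, zero_add, Nat.choose_self, Nat.cast_one,
      one_mul, Nat.sub_self, ← h1, hG1, Nat.reduceAdd] at h2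
    rw [h2]; ring
  refine ⟨fun a b => ?_, fun a b => ?_,
    2 * δ⁻¹ + N * δ⁻¹ + (2⁻¹ * (4 * δ⁻¹ ^ 2 + 4 * δ⁻¹ ^ 2 + N * δ⁻¹ ^ 2)) + δ⁻¹,
    fun z => ⟨?_, ?_, fun i => ?_⟩⟩
  · simp_rw [hc1]
    exact (hTl 1 a b).add (hs 1 le_rfl a b)
  · simp_rw [hc2]
    exact (((hTl 2 a b).sub ((hTl 1 a b).mul (hTl 1 a b))).add
      (hs 2 (by norm_num) a b)).const_mul _
  · rw [hc1]
    have h1 := hTb 1 z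
    have h2 := hsb 1 z
    simp only [Nat.factorial_one, Nat.cast_one, one_mul] at h1
    calc _ ≤ ‖T 1 z‖ + ‖∑ i, l z i ^ 1‖ := norm_add_le _ _
      _ ≤ 2 * δ⁻¹ ^ 1 * (1 + ‖z‖) ^ 1 + N * δ⁻¹ ^ 1 * (1 + ‖z‖) ^ 1 := add_le_add h1 h2
      _ = (2 * δ⁻¹ + N * δ⁻¹) * (1 + ‖z‖) ^ 1 := by ring
      _ ≤ _ := by
        refine mul_le_mul_of_nonneg_right ?_ (by positivity)
        have : 0 ≤ 2⁻¹ * (4 * δ⁻¹ ^ 2 + 4 * δ⁻¹ ^ 2 + N * δ⁻¹ ^ 2) := by positivity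
        have : 0 ≤ δ⁻¹ := by positivity
        linarith
  · rw [hc2]
    have h1 := hTb 1 z
    have h3 := hTb 2 z
    have h2 := hsb 2 z
    simp only [Nat.factorial_one, Nat.cast_one, one_mul, Nat.factorial_two, Nat.cast_ofNat] at h1 h3
    rw [norm_mul, norm_inv, Complex.norm_ofNat]
    calc _ ≤ 2⁻¹ * (‖T 2 z‖ + ‖T 1 z‖ * ‖T 1 z‖ + ‖∑ i, l z i ^ 2‖) := by
          gcongr
          refine (norm_add_le _ _).trans ?_
          gcongr
          refine (norm_sub_le _ _).trans ?_
          rw [norm_mul]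
      _ ≤ 2⁻¹ * (2 * 2 * δ⁻¹ ^ 2 * (1 + ‖z‖) ^ 2 + (2 * δ⁻¹ ^ 1 * (1 + ‖z‖) ^ 1) *
          (2 * δ⁻¹ ^ 1 * (1 + ‖z‖) ^ 1) + N * δ⁻¹ ^ 2 * (1 + ‖z‖) ^ 2) := by gcongr
      _ = (2⁻¹ * (4 * δ⁻¹ ^ 2 + 4 * δ⁻¹ ^ 2 + N * δ⁻¹ ^ 2)) * (1 + ‖z‖) ^ 2 := by ring
      _ ≤ _ := by
        gcongr
        have : 0 ≤ 2 * δ⁻¹ + N * δ⁻¹ := by positivity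
        have : 0 ≤ δ⁻¹ := by positivity
        linarith
  · refine (hl z i).trans ?_
    gcongr
    exact le_add_of_nonneg_left (by positivity)

end Core

/-! ### Polynomials in several variables -/

/-- A function that is a polynomial of degree at most `m` on every complex line is a polynomial: by
induction on the dimension, using Lagrange interpolation at `0, …, m` in the first coordinate. -/
theorem exists_mvPolynomial_of_lines (m : ℕ) : ∀ (d : ℕ) (f : (Fin d → ℂ) → ℂ),
    (∀ a b, ∃ p : Polynomial ℂ, p.natDegree ≤ m ∧ ∀ w : ℂ, f (a + w • b) = p.eval w) →
    ∃ P : MvPolynomial (Fin d) ℂ, ∀ x, f x = eval x P := by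
  intro d
  induction d with
  | zero => exact fun f _ => ⟨C (f 0), fun x => by rw [eval_C, Subsingleton.elim x 0]⟩
  | succ d ih =>
    intro f hf
    have hslice : ∀ j : ℕ, ∃ P : MvPolynomial (Fin d) ℂ,
        ∀ y, f (Fin.cons (j : ℂ) y) = eval y P := by
      intro j
      refine ih (fun y => f (Fin.cons (j : ℂ) y)) fun a b => ?_
      obtain ⟨p, hp, h⟩ := hf (Fin.cons (j : ℂ) a) (Fin.cons 0 b)
      refine ⟨p, hp, fun w => ?_⟩
      rw [← h w]
      congr 1
      funext i
      refine Fin.cases ?_ (fun i => ?_) i <;> simp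
    choose P hP using hslice
    refine ⟨∑ j ∈ Finset.range (m + 1), rename Fin.succ (P j) *
      Polynomial.aeval (X 0 : MvPolynomial (Fin (d + 1)) ℂ)
        (Lagrange.basis (Finset.range (m + 1)) (fun j : ℕ => (j : ℂ)) j), fun x => ?_⟩
    obtain ⟨p, hp, h⟩ := hf (Fin.cons 0 (Fin.tail x)) (Fin.cons 1 0)
    have hline : ∀ w : ℂ, f (Fin.cons w (Fin.tail x)) = p.eval w := by
      intro w
      rw [← h w]
      congr 1
      funext i
      refine Fin.cases ?_ (fun i => ?_) i <;> simp
    have hinj : Set.InjOn (fun j : ℕ => (j : ℂ)) (Finset.range (m + 1)) :=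
      Nat.cast_injective.injOn
    have hdeg : p.degree < (Finset.range (m + 1)).card := by
      rw [Finset.card_range]
      exact lt_of_le_of_lt Polynomial.degree_le_natDegree (by exact_mod_cast Nat.lt_succ_of_le hp)
    have hx : f x = p.eval (x 0) := by rw [← hline, Fin.cons_self_tail]
    have hae : ∀ q : Polynomial ℂ, eval x (Polynomial.aeval (X 0 : MvPolynomial (Fin (d + 1)) ℂ) q)
        = q.eval (x 0) := by
      intro q
      rw [← MvPolynomial.coe_aeval_eq_eval, RingHom.coe_coe, ← Polynomial.aeval_algHom_apply]
      simp
    rw [hx, Lagrange.eq_interpolate hinj hdeg, Lagrange.interpolate_apply]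
    simp only [Polynomial.eval_finsetSum, Polynomial.eval_mul, Polynomial.eval_C, map_sum, map_mul,
      eval_rename, hae]
    refine Finset.sum_congr rfl fun j _ => ?_
    rw [← hline, hP]
    rfl

theorem eval_smul_of_isHomogeneous {σ : Type*} [Fintype σ] {P : MvPolynomial σ ℂ} {k : ℕ}
    (hP : P.IsHomogeneous k) (t : ℂ) (b : σ → ℂ) : eval (t • b) P = t ^ k * eval b P := by
  rw [eval_eq', eval_eq', Finset.mul_sum]
  refine Finset.sum_congr rfl fun e he => ?_
  have h1 : ∑ i, e i = k := by
    have := hP (mem_support_iff.1 he)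
    rw [← this, Finsupp.weight_apply, Finsupp.sum_fintype _ _ (by simp)]
    simp
  simp only [Pi.smul_apply, smul_eq_mul, mul_pow, Finset.prod_mul_distrib, Finset.prod_pow_eq_pow_sum,
    h1]
  ring

/-- The total degree is bounded by the degree on the lines through the origin, since the restriction
to such a line has the values of the homogeneous components as coefficients. -/
theorem exists_mvPolynomial_degree_le (m d : ℕ) (f : (Fin d → ℂ) → ℂ)
    (hf : ∀ a b, ∃ p : Polynomial ℂ, p.natDegree ≤ m ∧ ∀ w : ℂ, f (a + w • b) = p.eval w) :
    ∃ P : MvPolynomial (Fin d) ℂ, P.totalDegree ≤ m ∧ ∀ x, f x = eval x P := by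
  obtain ⟨P, hP⟩ := exists_mvPolynomial_of_lines m d f hf
  have hvan : ∀ k, m < k → homogeneousComponent k P = 0 := by
    intro k hk
    by_cases hk' : P.totalDegree < k
    · exact homogeneousComponent_eq_zero _ _ hk'
    refine MvPolynomial.funext fun b => ?_
    obtain ⟨p, hp, h⟩ := hf 0 b
    have hpe : p = ∑ j ∈ Finset.range (P.totalDegree + 1),
        Polynomial.C (eval b (homogeneousComponent j P)) * Polynomial.X ^ j := by
      refine Polynomial.funext fun w => ?_
      rw [← h w, zero_add, hP, Polynomial.eval_finsetSum]
      conv_lhs => rw [← sum_homogeneousComponent P, map_sum]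
      refine Finset.sum_congr rfl fun j _ => ?_
      rw [eval_smul_of_isHomogeneous (homogeneousComponent_isHomogeneous j P)]
      rw [Polynomial.eval_mul, Polynomial.eval_C, Polynomial.eval_pow, Polynomial.eval_X, mul_comm]
    have hc : p.coeff k = 0 := Polynomial.coeff_eq_zero_of_natDegree_lt (by omega)
    rw [hpe, Polynomial.finsetSum_coeff] at hc
    simp only [Polynomial.coeff_C_mul_X_pow] at hc
    rw [Finset.sum_ite_eq, if_pos (by simp; omega)] at hc
    rw [hc, map_zero]
  refine ⟨P, ?_, hP⟩
  rw [← sum_homogeneousComponent P]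
  refine totalDegree_finsetSum_le fun k _ => ?_
  rcases le_or_gt k m with hk | hk
  · exact (homogeneousComponent_isHomogeneous k P).totalDegree_le.trans hk
  · rw [hvan k hk, totalDegree_zero]
    exact Nat.zero_le _

theorem one_add_norm_line_le {E : Type*} [NormedAddCommGroup E] [NormedSpace ℂ E] (a b : E) (w : ℂ) :
    1 + ‖a + w • b‖ ≤ (1 + ‖a‖ + ‖b‖) * (1 + ‖w‖) := by
  have h1 := norm_add_le a (w • b)
  rw [norm_smul] at h1
  nlinarith [norm_nonneg a, norm_nonneg b, norm_nonneg w,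
    mul_nonneg (norm_nonneg a) (norm_nonneg w)]

/-- Liouville's theorem on `ℂ^d` for line-holomorphic functions of polynomial growth. -/
theorem lineHol_liouville {d : ℕ} {f : EuclideanSpace ℂ (Fin d) → ℂ} (hf : LineHol f) {K : ℝ}
    (m : ℕ) (hb : ∀ z, ‖f z‖ ≤ K * (1 + ‖z‖) ^ m) :
    ∃ P : MvPolynomial (Fin d) ℂ, P.totalDegree ≤ m ∧ ∀ z, f z = eval (fun i => z i) P := by
  obtain ⟨P, hPd, hP⟩ := exists_mvPolynomial_degree_le m d (fun x => f (WithLp.toLp 2 x))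
    fun a b => by
      let u : EuclideanSpace ℂ (Fin d) := WithLp.toLp 2 a
      let v : EuclideanSpace ℂ (Fin d) := WithLp.toLp 2 b
      refine liouville_poly (hf u v) (K := |K| * (1 + ‖u‖ + ‖v‖) ^ m) (α := m) m (by simp)
        fun w => ?_
      rw [Real.rpow_natCast, mul_assoc, ← mul_pow]
      refine (hb _).trans ?_
      gcongr
      · exact le_abs_self K
      · exact one_add_norm_line_le u v w
  exact ⟨P, hPd, fun z => hP z.ofLp⟩

theorem lineHol_liouville_translate {d : ℕ} {f : EuclideanSpace ℂ (Fin d) → ℂ} (hf : LineHol f)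
    {K : ℝ} (m : ℕ) (hb : ∀ z, ‖f z‖ ≤ K * (1 + ‖z‖) ^ m) (a : EuclideanSpace ℂ (Fin d)) :
    ∃ P : MvPolynomial (Fin d) ℂ, P.totalDegree ≤ m ∧ ∀ z, f (z - a) = eval (fun i => z i) P := by
  refine lineHol_liouville (f := fun z => f (z - a)) (K := |K| * (1 + ‖a‖) ^ m)
    (fun b c => ?_) m fun z => ?_
  · have : (fun w : ℂ => f (b + w • c - a)) = fun w => f (b - a + w • c) := by
      funext w
      congr 1
      abel
    rw [this]
    exact hf _ _
  · rw [mul_assoc, ← mul_pow]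
    refine (hb _).trans ?_
    gcongr
    · exact le_abs_self K
    · have := norm_sub_le z a
      nlinarith [norm_nonneg z, norm_nonneg a, mul_nonneg (norm_nonneg a) (norm_nonneg z)]

end FewZeros

/-- Lemma 2.3. An entire function `φ` on `ℂ^d` of order at most 2 which, on every complex
line, either vanishes identically or has at most `N` zeros counted with multiplicity
(i.e. factors there as a polynomial of degree `≤ N` times a nonvanishing entire function),
is of the form `φ(z) = P(z)e^{Q(z)}` with `deg P ≤ N` and `deg Q ≤ 2`. -/
theorem entire_order_two_few_zeros
    (d N : ℕ) (φ : EuclideanSpace ℂ (Fin d) → ℂ)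
    (hent : Differentiable ℂ φ)
    (horder : ∀ ε : ℝ, 0 < ε → ∃ C : ℝ, ∀ z : EuclideanSpace ℂ (Fin d),
      ‖φ z‖ ≤ C * Real.exp (‖z‖ ^ (2 + ε)))
    (hlines : ∀ a z : EuclideanSpace ℂ (Fin d), z ≠ 0 →
      (∀ t : ℂ, φ (a + t • z) = 0) ∨
      (∃ (p : Polynomial ℂ) (h : ℂ → ℂ), p.natDegree ≤ N ∧ Differentiable ℂ h ∧
        (∀ t : ℂ, h t ≠ 0) ∧ ∀ t : ℂ, φ (a + t • z) = p.eval t * h t)) :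
    ∃ (P Q : MvPolynomial (Fin d) ℂ), P.totalDegree ≤ N ∧ Q.totalDegree ≤ 2 ∧
      ∀ z : EuclideanSpace ℂ (Fin d), φ z =
        MvPolynomial.eval (fun i => z i) P *
          Complex.exp (MvPolynomial.eval (fun i => z i) Q) := by
  by_cases hzero : ∀ z, φ z = 0
  · exact ⟨0, 0, by simp, by simp, fun z => by simp [hzero z]⟩
  push Not at hzero
  obtain ⟨a, ha⟩ := hzero
  set ψ : EuclideanSpace ℂ (Fin d) → ℂ := fun z => φ (a + z) / φ a with hψ
  have hψd : Differentiable ℂ ψ := by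
    have h1 : Differentiable ℂ fun z => φ (a + z) :=
      hent.comp ((differentiable_const a).add differentiable_id)
    simpa only [hψ, div_eq_mul_inv] using h1.mul_const (φ a)⁻¹
  have hψ0 : ψ 0 = 1 := by simp [hψ, ha]
  have hfac : ∀ z, ∃ (l : Fin N → ℂ) (c₁ c₂ : ℂ), ∀ t : ℂ,
      ψ (t • z) = (∏ i, (1 - l i * t)) * Complex.exp (c₁ * t + c₂ * t ^ 2) := by
    intro z
    by_cases hz : z = 0
    · exact ⟨0, 0, 0, fun t => by simp [hz, hψ0]⟩
    rcases hlines a z hz with h | ⟨p, h, hp, hd, h0, hfe⟩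
    · exact absurd (by simpa using h 0) ha
    obtain ⟨C, hC⟩ := horder (1 / 2) (by norm_num)
    refine FewZeros.line_factor (f := fun t => ψ (t • z)) (by simpa using hψ0)
      (K := |C| / ‖φ a‖) (A := (1 + ‖a‖ + ‖z‖) ^ (5 / 2 : ℝ)) (fun t => ?_) hp
      (h := fun t => h t / φ a) (hd.div_const _) (fun t => div_ne_zero (h0 t) ha) fun t => ?_
    · rw [hψ, norm_div, div_mul_eq_mul_div, ← Real.mul_rpow (by positivity) (by positivity)]
      gcongr
      refine (hC _).trans ?_
      rw [show (2 + 1 / 2 : ℝ) = 5 / 2 by norm_num]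
      gcongr
      · exact le_abs_self C
      · have := FewZeros.one_add_norm_line_le a z t
        linarith
    · simp only [hψ, hfe t]
      ring
  choose l c₁ c₂ hfac using hfac
  obtain ⟨hc₁, hc₂, K, hK⟩ := FewZeros.core hψd hψ0 hfac
  have hK0 : 0 ≤ K := by
    have h1 := (hK 0).1
    have h2 := norm_nonneg (c₁ 0)
    simp only [norm_zero, add_zero, one_pow, mul_one] at h1
    linarith
  have hprod : ∀ z, ψ z * Complex.exp (-(c₁ z + c₂ z)) = ∏ i, (1 - l z i) := by
    intro z
    have h1 := hfac z 1
    simp only [one_smul, mul_one, one_pow] at h1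
    rw [h1, mul_assoc, ← Complex.exp_add, add_neg_cancel, Complex.exp_zero, mul_one]
  obtain ⟨Q, hQd, hQ⟩ := FewZeros.lineHol_liouville_translate (f := fun z => c₁ z + c₂ z)
    (fun b c => (hc₁ b c).add (hc₂ b c)) (K := 2 * K) 2 (fun z => by
      obtain ⟨h1, h2, -⟩ := hK z
      refine (norm_add_le _ _).trans ?_
      have h3 : K * (1 + ‖z‖) ^ 1 ≤ K * (1 + ‖z‖) ^ 2 := by
        gcongr
        · linarith [norm_nonneg z]
        · norm_num
      linarith) a
  obtain ⟨P, hPd, hP⟩ := FewZeros.lineHol_liouville_translate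
    (f := fun z => φ a * (ψ z * Complex.exp (-(c₁ z + c₂ z))))
    (fun b c => ((FewZeros.lineHol_of_differentiable hψd b c).mul
      ((hc₁ b c).add (hc₂ b c)).neg.cexp).const_mul _) (K := ‖φ a‖ * (1 + K) ^ N) N (fun z => by
      simp only [hprod]
      rw [norm_mul, mul_assoc, norm_prod, ← mul_pow]
      gcongr
      calc ∏ i, ‖1 - l z i‖ ≤ ∏ _i : Fin N, (1 + K) * (1 + ‖z‖) := by
            refine Finset.prod_le_prod (fun i _ => norm_nonneg _) fun i _ => ?_
            have h1 := norm_sub_le 1 (l z i)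
            have h2 := (hK z).2.2 i
            rw [norm_one] at h1
            nlinarith [norm_nonneg z]
        _ = _ := by simp) a
  refine ⟨P, Q, hPd, hQd, fun z => ?_⟩
  rw [← hP, ← hQ, mul_assoc, mul_assoc, ← Complex.exp_add, neg_add_cancel, Complex.exp_zero,
    mul_one]
  simp only [hψ, add_sub_cancel]
  field_simp
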